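/- arXiv:1707.03770 — 3 statements merged into one kernel-verified Lean document; each statement's English description precedes it below -/
import Mathlib

section
/- Let X and U be finite nonempty sets, P a matrix with rows indexed by X×U and columns by X having nonnegative entries and each row summing to 1, and β ∈ (0,1). Fix an enumeration φ^{(1)},…,φ^{(ℓ)} of all deterministic policies φ : X → U. For every ς : X×U → ℝ: (i) for every probability mass function μ on {1,…,ℓ}, the matrix M_μ := I − β P (Σ_i μ(i) S_{φ^{(i)}}) is invertible and Q(ς)(x,u) ≤ (M_μ⁻¹ ς)(x,u) for every (x,u); (ii) there exists a deterministic policy φ such that Q(ς) = (I − β P S_φ)⁻¹ ς. Hence Q(ς) = min_μ M_μ⁻¹ ς, and the minimum is attained by a degenerate (deterministic) μ. -/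
open Matrix

/-!
Write `A = β P`, and let `S` be a convex combination of the matrices `S_φ`. Then `A S` is
nonnegative with row sums less than `1`, so `1 - A S` satisfies a minimum principle: if
`A S w ≤ w`, compare both sides at an index where `w` is minimal to get `0 ≤ w`. Hence `1 - A S`
is invertible with a nonnegative inverse. As `S` averages over actions, `S q` dominates the
minimum of `q` over actions, so the fixed point equation for `q` gives `(1 - A S) q ≤ ς`, with
equality when `S = S_φ` for a policy `φ` that is greedy for `q`.
-/

section StrictlySubstochastic

variable {m n R : Type*} [Fintype m] [Fintype n]

/-- A matrix with nonnegative entries and all row sums less than `1`, such as a transition matrix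
multiplied by a discount factor. It may be rectangular: the controlled transition matrix has rows
indexed by `X × U` and columns by `X`. -/
structure IsStrictlySubstochastic [Semiring R] [LinearOrder R] (A : Matrix m n R) : Prop where
  nonneg : ∀ i j, 0 ≤ A i j
  sum_lt_one : ∀ i, ∑ j, A i j < 1

namespace IsStrictlySubstochastic

theorem mul [Semiring R] [LinearOrder R] [IsStrictOrderedRing R] {A : Matrix m n R}
    {B : Matrix n m R} (hA : IsStrictlySubstochastic A) (hB0 : ∀ i j, 0 ≤ B i j)
    (hB1 : B *ᵥ 1 = 1) : IsStrictlySubstochastic (A * B) where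
  nonneg i j := Finset.sum_nonneg fun k _ => mul_nonneg (hA.nonneg i k) (hB0 k j)
  sum_lt_one i :=
    calc ∑ j, (A * B) i j = ((A * B) *ᵥ 1) i := by simp [mulVec, dotProduct]
      _ = (A *ᵥ 1) i := by rw [← mulVec_mulVec, hB1]
      _ = ∑ j, A i j := by simp [mulVec, dotProduct]
      _ < 1 := hA.sum_lt_one i

theorem nonneg_of_mulVec_le [Ring R] [LinearOrder R] [IsStrictOrderedRing R] {A : Matrix n n R}
    (hA : IsStrictlySubstochastic A) {w : n → R} (hw : A *ᵥ w ≤ w) : 0 ≤ w := by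
  intro i
  have : Nonempty n := ⟨i⟩
  obtain ⟨k, hk⟩ := Finite.exists_min w
  have hsum : (∑ j, A k j) * w k ≤ w k :=
    calc (∑ j, A k j) * w k = ∑ j, A k j * w k := Finset.sum_mul ..
      _ ≤ (A *ᵥ w) k :=
        Finset.sum_le_sum fun j _ => mul_le_mul_of_nonneg_left (hk j) (hA.nonneg k j)
      _ ≤ w k := hw k
  have hwk : 0 ≤ w k := by
    have h : 0 ≤ (1 - ∑ j, A k j) * w k := by rwa [sub_mul, one_mul, sub_nonneg]
    exact nonneg_of_mul_nonneg_right h (sub_pos.2 (hA.sum_lt_one k))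
  exact hwk.trans (hk i)

variable [DecidableEq n] [Field R] [LinearOrder R] [IsStrictOrderedRing R] {A : Matrix n n R}

theorem isUnit_one_sub (hA : IsStrictlySubstochastic A) : IsUnit (1 - A) := by
  rw [← mulVec_injective_iff_isUnit, ← coe_mulVecLin, injective_iff_map_eq_zero]
  intro v hv
  replace hv : A *ᵥ v = v := by
    rwa [mulVecLin_apply, sub_mulVec, one_mulVec, sub_eq_zero, eq_comm] at hv
  refine le_antisymm ?_ (hA.nonneg_of_mulVec_le hv.le)
  exact neg_nonneg.1 (hA.nonneg_of_mulVec_le (by rw [mulVec_neg, hv]))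

theorem eq_inv_one_sub_mulVec (hA : IsStrictlySubstochastic A) {c q : n → R}
    (hq : q = c + A *ᵥ q) : q = (1 - A)⁻¹ *ᵥ c := by
  have := hA.isUnit_one_sub.invertible
  have hc : (1 - A) *ᵥ q = c := by rwa [sub_mulVec, one_mulVec, sub_eq_iff_eq_add]
  rw [← hc, mulVec_mulVec, inv_mul_of_invertible, one_mulVec]

theorem le_inv_one_sub_mulVec (hA : IsStrictlySubstochastic A) {c q : n → R}
    (hq : q ≤ c + A *ᵥ q) : q ≤ (1 - A)⁻¹ *ᵥ c := by
  have := hA.isUnit_one_sub.invertible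
  set r := (1 - A)⁻¹ *ᵥ c with hr
  have hrc : r - A *ᵥ r = c := by
    calc r - A *ᵥ r = (1 - A) *ᵥ r := by rw [sub_mulVec, one_mulVec]
      _ = c := by rw [hr, mulVec_mulVec, mul_inv_of_invertible, one_mulVec]
  refine sub_nonneg.1 (hA.nonneg_of_mulVec_le ?_)
  calc A *ᵥ (r - q) = r - (c + A *ᵥ q) := by rw [mulVec_sub, ← hrc]; abel
    _ ≤ r - q := sub_le_sub_left hq r

end IsStrictlySubstochastic

end StrictlySubstochastic

section Policy

variable {X U : Type*}

/-- The minimum of `v (x, u)` over the actions `u`, as a function of the state `x`. It is encoded as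
an infimum, which is attained when `U` is finite and nonempty. -/
noncomputable def actionMin (v : X × U → ℝ) (x : X) : ℝ :=
  ⨅ u, v (x, u)

variable [DecidableEq X] [DecidableEq U] {S : Matrix X (X × U) ℝ}

/-- The matrix `S_φ` of a deterministic policy `φ`, which reads off from a vector indexed by
`X × U` its values along the graph of `φ`. -/
def selectionMatrix (φ : X → U) : Matrix X (X × U) ℝ :=
  (1 : Matrix (X × U) (X × U) ℝ).submatrix (fun x => (x, φ x)) id

theorem selectionMatrix_apply (φ : X → U) (x : X) (p : X × U) :
    selectionMatrix φ x p = if p.1 = x ∧ p.2 = φ x then 1 else 0 := by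
  simp [selectionMatrix, one_apply, Prod.ext_iff, eq_comm]

theorem nonneg_of_mem_convexHull_selectionMatrix
    (hS : S ∈ convexHull ℝ (Set.range selectionMatrix)) (x : X) (p : X × U) : 0 ≤ S x p := by
  have hconvex : Convex ℝ {T : Matrix X (X × U) ℝ | 0 ≤ T x p} :=
    convex_halfSpace_ge ⟨fun _ _ => rfl, fun _ _ => rfl⟩ 0
  refine convexHull_min ?_ hconvex hS
  rintro _ ⟨φ, rfl⟩
  rw [Set.mem_ofPred_eq, selectionMatrix_apply]
  positivity

variable [Fintype X] [Fintype U]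

theorem selectionMatrix_mulVec_apply (φ : X → U) (v : X × U → ℝ) (x : X) :
    (selectionMatrix φ *ᵥ v) x = v (x, φ x) :=
  congrFun (one_mulVec v) (x, φ x)

theorem exists_selectionMatrix_mulVec_eq_actionMin [Nonempty U] (v : X × U → ℝ) :
    ∃ φ, selectionMatrix φ *ᵥ v = actionMin v := by
  choose φ hφ using fun x => exists_eq_ciInf_of_finite (f := fun u => v (x, u))
  exact ⟨φ, funext fun x => (selectionMatrix_mulVec_apply φ v x).trans (hφ x)⟩

theorem actionMin_le_mulVec_of_mem_convexHull
    (hS : S ∈ convexHull ℝ (Set.range selectionMatrix)) (v : X × U → ℝ) :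
    actionMin v ≤ S *ᵥ v := by
  have hconvex : Convex ℝ {T : Matrix X (X × U) ℝ | actionMin v ≤ T *ᵥ v} :=
    convex_halfSpace_ge ⟨fun T T' => add_mulVec T T' v, fun c T => smul_mulVec c T v⟩ _
  refine convexHull_min ?_ hconvex hS
  rintro _ ⟨φ, rfl⟩ x
  rw [selectionMatrix_mulVec_apply]
  exact ciInf_le (Set.finite_range _).bddBelow (φ x)

theorem mulVec_one_of_mem_convexHull_selectionMatrix
    (hS : S ∈ convexHull ℝ (Set.range selectionMatrix)) : S *ᵥ 1 = 1 := by
  have hconvex : Convex ℝ {T : Matrix X (X × U) ℝ | T *ᵥ 1 = 1} :=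
    (convex_singleton (𝕜 := ℝ) (1 : X → ℝ)).is_linear_preimage
      ⟨fun T T' => add_mulVec T T' 1, fun c T => smul_mulVec c T 1⟩
  refine convexHull_min ?_ hconvex hS
  rintro _ ⟨φ, rfl⟩
  exact funext (selectionMatrix_mulVec_apply φ 1)

theorem IsStrictlySubstochastic.mul_of_mem_convexHull {A : Matrix (X × U) X ℝ}
    (hA : IsStrictlySubstochastic A) (hS : S ∈ convexHull ℝ (Set.range selectionMatrix)) :
    IsStrictlySubstochastic (A * S) :=
  hA.mul (nonneg_of_mem_convexHull_selectionMatrix hS)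
    (mulVec_one_of_mem_convexHull_selectionMatrix hS)

theorem IsStrictlySubstochastic.le_inv_one_sub_mul_mulVec {A : Matrix (X × U) X ℝ}
    (hA : IsStrictlySubstochastic A) (hS : S ∈ convexHull ℝ (Set.range selectionMatrix))
    {c q : X × U → ℝ} (hq : q ≤ c + A *ᵥ actionMin q) : q ≤ (1 - A * S)⁻¹ *ᵥ c := by
  refine (hA.mul_of_mem_convexHull hS).le_inv_one_sub_mulVec (hq.trans ?_)
  rw [← mulVec_mulVec]
  gcongr
  exact fun p => dotProduct_le_dotProduct_of_nonneg_left
    (actionMin_le_mulVec_of_mem_convexHull hS q) (hA.nonneg p)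

theorem IsStrictlySubstochastic.exists_eq_inv_one_sub_mul_mulVec [Nonempty U]
    {A : Matrix (X × U) X ℝ} (hA : IsStrictlySubstochastic A) {c q : X × U → ℝ}
    (hq : q = c + A *ᵥ actionMin q) : ∃ φ : X → U, q = (1 - A * selectionMatrix φ)⁻¹ *ᵥ c := by
  obtain ⟨φ, hφ⟩ := exists_selectionMatrix_mulVec_eq_actionMin q
  have hS := subset_convexHull ℝ _ (Set.mem_range_self (f := selectionMatrix) φ)
  refine ⟨φ, (hA.mul_of_mem_convexHull hS).eq_inv_one_sub_mulVec ?_⟩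
  rwa [← mulVec_mulVec, hφ]

end Policy

theorem stmt6_general {X U ι : Type*} [Fintype X] [Fintype U] [Fintype ι] [Nonempty U]
    [DecidableEq X] [DecidableEq U] {P : Matrix (X × U) X ℝ} (hP : ∀ p x', 0 ≤ P p x')
    {β : ℝ} (hβ : 0 ≤ β) (hβP : ∀ p, β * ∑ x', P p x' < 1) (e : ι → X → U) {ς q : X × U → ℝ}
    (hq : ∀ p, q p = ς p + β * ∑ x', P p x' * ⨅ u', q (x', u')) :
    (∀ μ : ι → ℝ, (∀ i, 0 ≤ μ i) → ∑ i, μ i = 1 →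
      IsUnit ((1 : Matrix (X × U) (X × U) ℝ) - β • (P * ∑ i, μ i • selectionMatrix (e i))) ∧
      ∀ p, q p ≤ (((1 : Matrix (X × U) (X × U) ℝ)
        - β • (P * ∑ i, μ i • selectionMatrix (e i)))⁻¹ *ᵥ ς) p) ∧
    ∃ φ : X → U,
      q = ((1 : Matrix (X × U) (X × U) ℝ) - β • (P * selectionMatrix φ))⁻¹ *ᵥ ς := by
  have hA : IsStrictlySubstochastic (β • P) :=
    ⟨fun p x' => mul_nonneg hβ (hP p x'), fun p => by simpa [← Finset.mul_sum] using hβP p⟩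
  have hqA : q = ς + (β • P) *ᵥ actionMin q := by
    rw [smul_mulVec]
    exact funext hq
  simp only [← smul_mul]
  refine ⟨fun μ hμ0 hμ1 => ?_, hA.exists_eq_inv_one_sub_mul_mulVec hqA⟩
  have hS : ∑ i, μ i • selectionMatrix (e i) ∈ convexHull ℝ (Set.range selectionMatrix) :=
    (convex_convexHull ℝ _).sum_mem (fun i _ => hμ0 i) hμ1
      fun i _ => subset_convexHull ℝ _ (Set.mem_range_self (e i))
  exact ⟨(hA.mul_of_mem_convexHull hS).isUnit_one_sub, hA.le_inv_one_sub_mul_mulVec hS hqA.le⟩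

/-- `Q(ς)` is dominated by `M_μ⁻¹ ς` for every randomized stationary policy `μ`,
and equals `(I - β P S_φ)⁻¹ ς` for some deterministic policy `φ`; hence
`Q(ς) = min_μ M_μ⁻¹ ς`, the minimum being attained at a deterministic policy. -/
theorem stmt6 {X U : Type*} [Fintype X] [Fintype U] [Nonempty X] [Nonempty U]
    [DecidableEq X] [DecidableEq U]
    (P : X × U → X → ℝ) (hP0 : ∀ p x', 0 ≤ P p x') (hP1 : ∀ p, ∑ x', P p x' = 1)
    (β : ℝ) (hβ : β ∈ Set.Ioo (0 : ℝ) 1)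
    (ℓ : ℕ) (e : Fin ℓ ≃ (X → U))
    (Sm : (X → U) → Matrix X (X × U) ℝ)
    (hSm : ∀ (φ : X → U) (x : X) (p : X × U),
      Sm φ x p = if p.1 = x ∧ p.2 = φ x then 1 else 0)
    (Pm : Matrix (X × U) X ℝ) (hPm : ∀ p x', Pm p x' = P p x')
    (ς q : X × U → ℝ)
    (hq : ∀ p, q p = ς p + β * ∑ x', P p x' * ⨅ u' : U, q (x', u')) :
    (∀ μ : Fin ℓ → ℝ, (∀ i, 0 ≤ μ i) → (∑ i, μ i = 1) →
      IsUnit ((1 : Matrix (X × U) (X × U) ℝ) - β • (Pm * ∑ i, μ i • Sm (e i))) ∧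
      ∀ p, q p ≤ ((1 : Matrix (X × U) (X × U) ℝ)
          - β • (Pm * ∑ i, μ i • Sm (e i)))⁻¹.mulVec ς p) ∧
    (∃ φ : X → U,
      q = ((1 : Matrix (X × U) (X × U) ℝ) - β • (Pm * Sm φ))⁻¹.mulVec ς) := by
  obtain ⟨rfl, rfl⟩ : Sm = selectionMatrix ∧ Pm = of P :=
    ⟨by ext; rw [hSm, selectionMatrix_apply], ext hPm⟩
  exact stmt6_general hP0 hβ.1.le (fun p => by simpa [hP1] using hβ.2) e hq
end

section
/- Let X and U be finite nonempty sets, P a matrix with rows indexed by X×U and columns by X having nonnegative entries and each row summing to 1, and β ∈ (0,1). Equip ℝ^{X×U} with the supremum norm ‖·‖_∞. Then the map Q is Lipschitz with constant 1/(1−β): for all ς₁, ς₂, ‖Q(ς₁) − Q(ς₂)‖_∞ ≤ (1/(1−β)) ‖ς₁ − ς₂‖_∞; and its inverse Q⁻¹, given explicitly by (Q⁻¹ q)(x,u) = q(x,u) − β Σ_{x'} P((x,u),x') min_{u'} q(x',u'), is Lipschitz with constant 1+β: for all q₁, q₂, ‖Q⁻¹(q₁) − Q⁻¹(q₂)‖_∞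 ≤ (1+β) ‖q₁ − q₂‖_∞. -/
/-!
Let `K q = β P (min q)`. Minimization over actions is nonexpansive in the supremum norm and `P` has
operator norm `1`, so `K` is `β`-Lipschitz. The inverse of `Q` is the perturbation `q ↦ q - K q` of
the identity, which scales distances by a factor between `1 - β` and `1 + β`. The lower bound gives
both its injectivity and the Lipschitz constant `1 / (1 - β)` of `Q`.
-/

open scoped NNReal Matrix Matrix.Norms.Operator

lemma dist_pi_eq_ciSup {ι : Type*} {α : ι → Type*} [Fintype ι] [Nonempty ι]
    [∀ i, PseudoMetricSpace (α i)] (f g : ∀ i, α i) : dist f g = ⨆ i, dist (f i) (g i) :=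
  le_antisymm (dist_pi_le_iff'.mpr <| le_ciSup <| Set.finite_range _ |>.bddAbove)
    (ciSup_le <| dist_le_pi_dist f g)

lemma lipschitzWith_ciInf {ι : Type*} [Fintype ι] [Nonempty ι] :
    LipschitzWith 1 fun f : ι → ℝ => ⨅ i, f i :=
  LipschitzWith.of_le_add fun f g =>
    calc ⨅ i, f i ≤ ⨅ i, (g i + dist f g) :=
          ciInf_mono (Set.finite_range f).bddBelow fun i => sub_le_iff_le_add'.mp <|
            (le_abs_self _).trans (dist_le_pi_dist f g i)
      _ = (⨅ i, g i) + dist f g := (ciInf_add (Set.finite_range g).bddBelow _).symm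

section Perturbation

variable {E : Type*} [SeminormedAddCommGroup E] {K : E → E} {L : ℝ≥0}

lemma lipschitzWith_id_sub (hK : LipschitzWith L K) : LipschitzWith (1 + L) fun x => x - K x :=
  LipschitzWith.id.sub hK

lemma antilipschitzWith_id_sub (hK : LipschitzWith L K) (hL : L < 1) :
    AntilipschitzWith (1 - L)⁻¹ fun x => x - K x := by
  simpa [sub_eq_add_neg] using AntilipschitzWith.id.add_lipschitzWith hK.neg (by simpa using hL)

end Perturbation

lemma lipschitzWith_mulVec {m n α : Type*} [Fintype m] [Fintype n] [NonUnitalSeminormedRing α]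
    (A : Matrix m n α) : LipschitzWith ‖A‖₊ fun v : n → α => A *ᵥ v :=
  LipschitzWith.of_dist_le_mul fun v w => by
    simpa only [dist_eq_norm, Matrix.mulVec_sub, coe_nnnorm] using A.linfty_opNorm_mulVec (v - w)

lemma linfty_opNorm_eq_one_of_stochastic {m n : Type*} [Fintype m] [Fintype n] [Nonempty m]
    {A : Matrix m n ℝ} (hA0 : ∀ i j, 0 ≤ A i j) (hA1 : ∀ i, ∑ j, A i j = 1) : ‖A‖ = 1 := by
  have row_sum (i : m) : ∑ j, ‖A i j‖₊ = 1 := NNReal.eq <| by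
    simpa [abs_of_nonneg (hA0 i _)] using hA1 i
  simp [Matrix.linfty_opNorm_def, row_sum, Finset.sup_const Finset.univ_nonempty]

section Discounted

variable {X U : Type*} [Fintype X] [Fintype U]

/-- The value function `x ↦ min_u q(x, u)` of a Q-function `q`; the minimum is written as an infimum
in `ℝ`, hence is meaningful for finite nonempty `U`. -/
noncomputable def minValue (q : X × U → ℝ) (x : X) : ℝ := ⨅ u, q (x, u)

/-- The discounted expected value `β P (min q)` of the next state: the operator `K` for which `Q(ς)`
is the solution of `q = ς + K q`. -/
noncomputable def discountedMinValue (P : Matrix (X × U) X ℝ) (β : ℝ) (q : X × U → ℝ) :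
    X × U → ℝ :=
  β • P *ᵥ minValue q

lemma lipschitzWith_minValue [Nonempty U] :
    LipschitzWith 1 (minValue : (X × U → ℝ) → X → ℝ) :=
  LipschitzWith.of_dist_le_mul fun q₁ q₂ => (dist_pi_le_iff (by positivity)).mpr fun x =>
    lipschitzWith_ciInf.dist_le_mul_of_le <| (dist_pi_le_iff dist_nonneg).mpr fun u =>
      dist_le_pi_dist q₁ q₂ (x, u)

lemma lipschitzWith_discountedMinValue [Nonempty U] (P : Matrix (X × U) X ℝ) (β : ℝ) :
    LipschitzWith (‖β‖₊ * ‖P‖₊) (discountedMinValue P β) := by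
  rw [← mul_one ‖P‖₊]
  exact (lipschitzWith_smul β).comp ((lipschitzWith_mulVec P).comp lipschitzWith_minValue)

/-- Here `‖P‖` is the `ℓ^∞` operator norm, the largest absolute row sum of `P`. -/
theorem stmt14_general [Nonempty X] [Nonempty U]
    (P : Matrix (X × U) X ℝ) (β : ℝ) (hβ : |β| * ‖P‖ < 1)
    (Q : (X × U → ℝ) → (X × U → ℝ))
    (hQ : ∀ ς p, Q ς p = ς p + β * ∑ x', P p x' * ⨅ u' : U, Q ς (x', u'))
    (Qinv : (X × U → ℝ) → (X × U → ℝ))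
    (hQinv : ∀ q p, Qinv q p = q p - β * ∑ x', P p x' * ⨅ u' : U, q (x', u')) :
    (∀ ς, Qinv (Q ς) = ς) ∧ (∀ q, Q (Qinv q) = q) ∧
    (∀ ς₁ ς₂ : X × U → ℝ,
      (⨆ p, |Q ς₁ p - Q ς₂ p|) ≤ (1 / (1 - |β| * ‖P‖)) * ⨆ p, |ς₁ p - ς₂ p|) ∧
    (∀ q₁ q₂ : X × U → ℝ,
      (⨆ p, |Qinv q₁ p - Qinv q₂ p|) ≤ (1 + |β| * ‖P‖) * ⨆ p, |q₁ p - q₂ p|) := by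
  obtain rfl : Qinv = fun q => q - discountedMinValue P β q := funext₂ hQinv
  have hK := lipschitzWith_discountedMinValue P β
  have hL : ‖β‖₊ * ‖P‖₊ < 1 := hβ
  have hanti := antilipschitzWith_id_sub hK hL
  have hright : Function.RightInverse Q fun q => q - discountedMinValue P β q :=
    fun ς => sub_eq_of_eq_add <| funext <| hQ ς
  simp only [← Real.dist_eq, ← dist_pi_eq_ciSup]
  refine ⟨hright, hright.leftInverse_of_injective hanti.injective, fun ς₁ ς₂ => ?_,
    (lipschitzWith_id_sub hK).dist_le_mul⟩
  simpa [NNReal.coe_sub hL.le] using (hanti.to_rightInverse hright).dist_le_mul ς₁ ς₂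

end Discounted

/-- In the supremum norm, `Q` is Lipschitz with constant `1/(1-β)` and its inverse
`Q⁻¹ q = q - β P (min q)` is Lipschitz with constant `1+β`. -/
theorem stmt14 {X U : Type*} [Fintype X] [Fintype U] [Nonempty X] [Nonempty U]
    (P : X × U → X → ℝ) (hP0 : ∀ p x', 0 ≤ P p x') (hP1 : ∀ p, ∑ x', P p x' = 1)
    (β : ℝ) (hβ : β ∈ Set.Ioo (0 : ℝ) 1)
    (Q : (X × U → ℝ) → (X × U → ℝ))
    (hQ : ∀ ς p, Q ς p = ς p + β * ∑ x', P p x' * ⨅ u' : U, Q ς (x', u'))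
    (Qinv : (X × U → ℝ) → (X × U → ℝ))
    (hQinv : ∀ q p, Qinv q p = q p - β * ∑ x', P p x' * ⨅ u' : U, q (x', u')) :
    (∀ ς, Qinv (Q ς) = ς) ∧ (∀ q, Q (Qinv q) = q) ∧
    (∀ ς₁ ς₂ : X × U → ℝ,
      (⨆ p, |Q ς₁ p - Q ς₂ p|) ≤ (1 / (1 - β)) * ⨆ p, |ς₁ p - ς₂ p|) ∧
    (∀ q₁ q₂ : X × U → ℝ,
      (⨆ p, |Qinv q₁ p - Qinv q₂ p|) ≤ (1 + β) * ⨆ p, |q₁ p - q₂ p|) := by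
  have hL : |β| * ‖Matrix.of P‖ = β := by
    rw [linfty_opNorm_eq_one_of_stochastic (A := .of P) hP0 hP1, mul_one, abs_of_pos hβ.1]
  simpa only [hL] using stmt14_general (.of P) β (hL.trans_lt hβ.2) Q hQ Qinv hQinv
end

section
/- Let X and U be finite nonempty sets, P a matrix with rows indexed by X×U and columns by X having nonnegative entries and each row summing to 1, β ∈ (0,1), and let Π be the diagonal matrix on ℝ^{X×U} with diagonal entries ϖ(x,u) > 0. Fix an enumeration φ^{(1)},…,φ^{(ℓ)} of all deterministic policies φ : X → U, and for q : X×U → ℝ define φ^q := φ^{(κ)}, where κ is the smallest index i such that φ^{(i)}(x) ∈ argmin_u q(x,u) for every x ∈ X. Let (θ_n)_{n≥0} be a sequence in ℝ^{X×U}, (Â_n)_{n≥0} a sequence of matrices on ℝ^{X×U}, and c̄ : X×U → ℝ. Suppose: (a) there are a deterministic policy φ_∞ and N with φ^{θ_n} = φ_∞ for all n ≥ N; (b) Â_n → −Π (I − β P S_{φ_∞}) as n → ∞; and (c) Ĉ_n := −Π⁻¹ Â_n θ_n → c̄ as n → ∞. Then θ_n → Q(c̄) as n → ∞. -/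
open Matrix Filter Topology

/-!
The matrices `-Π⁻¹ Â_n` converge to the invertible matrix `I - βPS_φ`, so `θ_n` converges to the
solution `L` of the policy evaluation equation `L = c + βPS_φ L`. A policy that is greedy for
infinitely many `θ_n` is greedy for `L`, and then `S_φ L` is the minimum of `L` over actions: `L`
solves the Bellman equation, whose solution is unique because the Bellman operator is a
contraction in the sup norm.
-/

section Limits

variable {α 𝕜 m n : Type*} [Fintype n] [TopologicalSpace 𝕜] {l : Filter α}

lemma tendsto_mulVec [NonUnitalNonAssocSemiring 𝕜] [ContinuousAdd 𝕜] [ContinuousMul 𝕜]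
    {A : α → Matrix m n 𝕜} {B : Matrix m n 𝕜} {v : α → n → 𝕜} {w : n → 𝕜}
    (hA : Tendsto A l (𝓝 B)) (hv : Tendsto v l (𝓝 w)) :
    Tendsto (fun a => A a *ᵥ v a) l (𝓝 (B *ᵥ w)) :=
  ((continuous_fst.matrix_mulVec continuous_snd).tendsto (B, w)).comp (hA.prodMk_nhds hv)

lemma tendsto_inv_mulVec_of_tendsto_mulVec [Field 𝕜] [IsTopologicalDivisionRing 𝕜] [T1Space 𝕜]
    [DecidableEq n] {A : α → Matrix n n 𝕜} {B : Matrix n n 𝕜} {v : α → n → 𝕜} {b : n → 𝕜}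
    (hA : Tendsto A l (𝓝 B)) (hB : IsUnit B) (hv : Tendsto (fun a => A a *ᵥ v a) l (𝓝 b)) :
    Tendsto v l (𝓝 (B⁻¹ *ᵥ b)) := by
  have hdetB : B.det ≠ 0 := ((isUnit_iff_isUnit_det B).1 hB).ne_zero
  have hdet : ∀ᶠ a in l, (A a).det ≠ 0 :=
    ((continuous_id.matrix_det.tendsto B).comp hA).eventually_ne hdetB
  have hinv : ContinuousAt Inv.inv B :=
    continuousAt_matrix_inv B (by simpa only [Ring.inverse_eq_inv'] using continuousAt_inv₀ hdetB)
  refine (tendsto_mulVec (hinv.tendsto.comp hA) hv).congr' ?_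
  filter_upwards [hdet] with a ha
  simp only [Function.comp_apply, mulVec_mulVec, nonsing_inv_mul _ ha.isUnit, one_mulVec]

end Limits

lemma lipschitzWith_iInf {ι : Type*} [Fintype ι] :
    LipschitzWith 1 fun f : ι → ℝ => ⨅ i, f i := by
  refine LipschitzWith.of_le_add fun f g => ?_
  cases isEmpty_or_nonempty ι
  · simp
  · refine sub_le_iff_le_add.1 (le_ciInf fun i => ?_)
    have hf : ⨅ i, f i ≤ f i := ciInf_le (Set.finite_range f).bddBelow i
    have hfg : f i - g i ≤ dist f g := (le_abs_self _).trans (dist_le_pi_dist f g i)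
    linarith

section Policies

variable {X U : Type*}

/-- The policy `φ` picks, in every state, an action minimizing the Q-function `q`. -/
def IsGreedy (φ : X → U) (q : X × U → ℝ) : Prop :=
  ∀ x u, q (x, φ x) ≤ q (x, u)

/-- The value function `x ↦ min_u q (x, u)` of a Q-function, written as an infimum; the two
agree when `U` is finite and nonempty. -/
noncomputable def minOverActions (q : X × U → ℝ) (x : X) : ℝ :=
  ⨅ u, q (x, u)

/-- The matrix `S_φ` of the policy `φ`, which evaluates Q-functions along `φ`. -/
def policyMatrix [DecidableEq X] [DecidableEq U] (φ : X → U) : Matrix X (X × U) ℝ :=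
  of fun x => Pi.single (x, φ x) 1

lemma policyMatrix_mulVec [Fintype X] [Fintype U] [DecidableEq X] [DecidableEq U]
    (φ : X → U) (q : X × U → ℝ) : policyMatrix φ *ᵥ q = fun x => q (x, φ x) :=
  funext fun x => single_one_dotProduct (x, φ x) q

lemma isClosed_setOf_isGreedy (φ : X → U) : IsClosed {q : X × U → ℝ | IsGreedy φ q} := by
  simp only [IsGreedy, Set.ofPred_forall]
  exact isClosed_iInter fun x => isClosed_iInter fun u =>
    isClosed_le (continuous_apply (x, φ x)) (continuous_apply (x, u))

lemma IsGreedy.minOverActions_eq {φ : X → U} {q : X × U → ℝ} (hφ : IsGreedy φ q) :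
    minOverActions q = fun x => q (x, φ x) := by
  ext x
  have hleast : IsLeast (Set.range fun u => q (x, u)) (q (x, φ x)) :=
    ⟨Set.mem_range_self (φ x), Set.forall_mem_range.2 (hφ x)⟩
  exact hleast.csInf_eq

lemma lipschitzWith_minOverActions [Fintype X] [Fintype U] :
    LipschitzWith 1 (minOverActions : (X × U → ℝ) → X → ℝ) := by
  refine LipschitzWith.of_dist_le_mul fun q r => ?_
  refine (dist_pi_le_iff (by positivity)).2 fun x => ?_
  refine (lipschitzWith_iInf.dist_le_mul (fun u => q (x, u)) fun u => r (x, u)).trans ?_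
  gcongr
  exact (dist_pi_le_iff dist_nonneg).2 fun u => dist_le_pi_dist q r (x, u)

end Policies

/-- The Bellman operator with one-stage cost `c`, whose fixed point is `Q(c)`. The discount is
absorbed into the kernel: `K` stands for `βP`. -/
noncomputable def bellmanOperator {X U : Type*} [Fintype X] (K : Matrix (X × U) X ℝ)
    (c q : X × U → ℝ) : X × U → ℝ :=
  c + K *ᵥ minOverActions q

lemma IsGreedy.isFixedPt_bellmanOperator_iff {X U : Type*} [Fintype X] [Fintype U]
    [DecidableEq X] [DecidableEq U] {K : Matrix (X × U) X ℝ} {c q : X × U → ℝ} {φ : X → U}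
    (hφ : IsGreedy φ q) :
    Function.IsFixedPt (bellmanOperator K c) q ↔ (1 - K * policyMatrix φ) *ᵥ q = c := by
  rw [Function.IsFixedPt, bellmanOperator, hφ.minOverActions_eq, ← policyMatrix_mulVec,
    sub_mulVec, one_mulVec, ← mulVec_mulVec, sub_eq_iff_eq_add, eq_comm]

section OperatorNorm

open scoped Matrix.Norms.Operator

lemma linfty_opNorm_lt_iff {m n α : Type*} [Fintype m] [Fintype n] [SeminormedAddCommGroup α]
    {A : Matrix m n α} {r : ℝ} (hr : 0 < r) : ‖A‖ < r ↔ ∀ i, ∑ j, ‖A i j‖ < r := by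
  lift r to NNReal using hr.le
  rw [linfty_opNorm_def, NNReal.coe_lt_coe, Finset.sup_lt_iff (NNReal.coe_pos.1 hr)]
  simp only [Finset.mem_univ, forall_const, ← NNReal.coe_lt_coe, NNReal.coe_sum, coe_nnnorm]

variable {X U : Type*} [Fintype X] [Fintype U]

lemma linfty_opNorm_policyMatrix_le_one [DecidableEq X] [DecidableEq U] (φ : X → U) :
    ‖policyMatrix φ‖ ≤ 1 := by
  rw [linfty_opNorm_def]
  refine NNReal.coe_le_one.2 (Finset.sup_le fun x _ => ?_)
  simp [policyMatrix, Pi.single_apply, apply_ite]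

variable {K : Matrix (X × U) X ℝ}

lemma isUnit_one_sub_mul_policyMatrix [DecidableEq X] [DecidableEq U]
    (hK : ‖K‖ < 1) (φ : X → U) : IsUnit (1 - K * policyMatrix φ) := by
  refine isUnit_one_sub_of_norm_lt_one ?_
  calc ‖K * policyMatrix φ‖ ≤ ‖K‖ * ‖policyMatrix φ‖ := linfty_opNorm_mul _ _
    _ ≤ ‖K‖ := mul_le_of_le_one_right (norm_nonneg K) (linfty_opNorm_policyMatrix_le_one φ)
    _ < 1 := hK

lemma contractingWith_bellmanOperator (hK : ‖K‖ < 1) (c : X × U → ℝ) :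
    ContractingWith ‖K‖₊ (bellmanOperator K c) := by
  refine ⟨hK, LipschitzWith.of_dist_le_mul fun q r => ?_⟩
  calc dist (bellmanOperator K c q) (bellmanOperator K c r)
      = ‖K *ᵥ (minOverActions q - minOverActions r)‖ := by
        rw [bellmanOperator, bellmanOperator, dist_add_left, dist_eq_norm, mulVec_sub]
    _ ≤ ‖K‖ * dist (minOverActions q) (minOverActions r) := by
        rw [dist_eq_norm]
        exact linfty_opNorm_mulVec _ _
    _ ≤ ‖K‖ * dist q r := by
        gcongr
        simpa using lipschitzWith_minOverActions.dist_le_mul q r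

end OperatorNorm

lemma sum_abs_smul_lt_one {m n : Type*} [Fintype n] {P : Matrix m n ℝ}
    (hP0 : ∀ i j, 0 ≤ P i j) (hP1 : ∀ i, ∑ j, P i j = 1) {β : ℝ} (hβ : |β| < 1) (i : m) :
    ∑ j, |(β • P) i j| < 1 := by
  simpa only [Matrix.smul_apply, smul_eq_mul, abs_mul, abs_of_nonneg (hP0 i _),
    ← Finset.mul_sum, hP1, mul_one] using hβ

theorem stmt19_general {X U α : Type*} [Fintype X] [Fintype U] [DecidableEq X] [DecidableEq U]
    {l : Filter α} {K : Matrix (X × U) X ℝ} (hK : ∀ p, ∑ x, |K p x| < 1)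
    {G : Matrix (X × U) (X × U) ℝ} (hG : IsUnit G)
    {θ : α → X × U → ℝ} {A : α → Matrix (X × U) (X × U) ℝ} {c q : X × U → ℝ} {φ : X → U}
    (hφ : ∃ᶠ a in l, IsGreedy φ (θ a))
    (hA : Tendsto A l (𝓝 (-(G * (1 - K * policyMatrix φ)))))
    (hc : Tendsto (fun a => -(G⁻¹ *ᵥ (A a *ᵥ θ a))) l (𝓝 c))
    (hq : Function.IsFixedPt (bellmanOperator K c) q) :
    Tendsto θ l (𝓝 q) := by
  have hnorm := (linfty_opNorm_lt_iff (A := K) one_pos).2 hK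
  set M := 1 - K * policyMatrix φ
  have hM : IsUnit M := isUnit_one_sub_mul_policyMatrix hnorm φ
  have hGA : Tendsto (fun a => -(G⁻¹ * A a)) l (𝓝 M) := by
    have hGM : -(G⁻¹ * -(G * M)) = M := by
      rw [mul_neg, neg_neg, nonsing_inv_mul_cancel_left _ _ ((isUnit_iff_isUnit_det G).1 hG)]
    simpa only [hGM] using (hA.const_mul G⁻¹).neg
  have hθ : Tendsto θ l (𝓝 (M⁻¹ *ᵥ c)) :=
    tendsto_inv_mulVec_of_tendsto_mulVec hGA hM <| by
      simpa only [neg_mulVec, mulVec_mulVec] using hc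
  have hgreedy : IsGreedy φ (M⁻¹ *ᵥ c) :=
    (isClosed_setOf_isGreedy φ).mem_of_frequently_of_tendsto hφ hθ
  have hfix : Function.IsFixedPt (bellmanOperator K c) (M⁻¹ *ᵥ c) :=
    hgreedy.isFixedPt_bellmanOperator_iff.2 <| by
      rw [mulVec_mulVec, mul_nonsing_inv _ ((isUnit_iff_isUnit_det M).1 hM), one_mulVec]
  rwa [(contractingWith_bellmanOperator hnorm c).fixedPoint_unique' hq hfix]

/-- Inverse dynamic programming limit: if the greedy policies `φ^{θ_n}` are
eventually equal to `φ_∞`, `Â_n → -Π(I - βPS_{φ_∞})`, and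
`Ĉ_n = -Π⁻¹ Â_n θ_n → c̄`, then `θ_n → Q(c̄)`. -/
theorem stmt19 {X U : Type*} [Fintype X] [Fintype U] [Nonempty X] [Nonempty U]
    [DecidableEq X] [DecidableEq U]
    (P : X × U → X → ℝ) (hP0 : ∀ p x', 0 ≤ P p x') (hP1 : ∀ p, ∑ x', P p x' = 1)
    (β : ℝ) (hβ : β ∈ Set.Ioo (0 : ℝ) 1)
    (ϖ : X × U → ℝ) (hϖ : ∀ p, 0 < ϖ p)
    (ℓ : ℕ) (e : Fin ℓ ≃ (X → U))
    (ι : (X × U → ℝ) → Fin ℓ)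
    (hιopt : ∀ (q : X × U → ℝ) (x : X) (u : U), q (x, e (ι q) x) ≤ q (x, u))
    (hιmin : ∀ (q : X × U → ℝ) (i : Fin ℓ),
      (∀ (x : X) (u : U), q (x, e i x) ≤ q (x, u)) → ι q ≤ i)
    (Sm : (X → U) → Matrix X (X × U) ℝ)
    (hSm : ∀ (φ : X → U) (x : X) (p : X × U),
      Sm φ x p = if p.1 = x ∧ p.2 = φ x then 1 else 0)
    (Pm : Matrix (X × U) X ℝ) (hPm : ∀ p x', Pm p x' = P p x')
    (θ : ℕ → X × U → ℝ)
    (Ahat : ℕ → Matrix (X × U) (X × U) ℝ)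
    (cbar : X × U → ℝ)
    (φinf : X → U)
    (ha : ∃ N : ℕ, ∀ n, N ≤ n → e (ι (θ n)) = φinf)
    (hb : Tendsto Ahat atTop
      (𝓝 (-(Matrix.diagonal ϖ * ((1 : Matrix (X × U) (X × U) ℝ) - β • (Pm * Sm φinf))))))
    (hc : Tendsto (fun n => -((Matrix.diagonal ϖ)⁻¹.mulVec ((Ahat n).mulVec (θ n))))
      atTop (𝓝 cbar))
    (Qc : X × U → ℝ)
    (hQc : ∀ p, Qc p = cbar p + β * ∑ x', P p x' * ⨅ u' : U, Qc (x', u')) :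
    Tendsto θ atTop (𝓝 Qc) := by
  obtain rfl : Sm = policyMatrix := by
    ext φ x p
    simp only [hSm, policyMatrix, of_apply, Pi.single_apply, Prod.ext_iff]
  obtain rfl : Pm = P := funext₂ hPm
  obtain ⟨N, hN⟩ := ha
  have hgreedy : ∀ᶠ n in atTop, IsGreedy φinf (θ n) :=
    (eventually_ge_atTop N).mono fun n hn => hN n hn ▸ hιopt (θ n)
  have hQ : Function.IsFixedPt (bellmanOperator (β • Pm) cbar) Qc := by
    ext p
    rw [bellmanOperator, smul_mulVec]
    exact (hQc p).symm
  exact stmt19_general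
    (sum_abs_smul_lt_one (P := Pm) hP0 hP1 (abs_lt.2 ⟨by linarith [hβ.1], hβ.2⟩))
    (isUnit_diagonal.2 (Pi.isUnit_iff.2 fun p => (hϖ p).ne'.isUnit))
    hgreedy.frequently (by rwa [smul_mul]) hc hQ
end
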